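/- arXiv:2506.01681 — 3 statements merged into one kernel-verified Lean document; each statement's English description precedes it below -/
import Mathlib

section
/- (Per-iteration inequality of mirror descent) Let Q ⊆ E be a compact convex set, ψ : Q → ℝ a differentiable σ-strongly convex prox-function (σ > 0), f : Q → ℝ a convex continuous function, x* a minimizer of f over Q, γ_k > 0, x^k ∈ Q, ∇f(x^k) ∈ ∂f(x^k), and x^{k+1} = argmin_{x ∈ Q} { ⟨∇f(x^k), x⟩ + (1/γ_k) V_ψ(x, x^k) }. Then f(x^k) − f(x*) ≤ (1/γ_k) ( V_ψ(x*, x^k) − V_ψ(x*, x^{k+1}) ) + (γ_k / (2σ)) ‖∇f(x^k)‖_*². -/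
/-- The Bregman divergence `V_ψ(x, y) = ψ(x) − ψ(y) − ⟨∇ψ(y), x − y⟩` associated with a
differentiable function `ψ` with gradient `ψ'`. -/
noncomputable def bregman {E : Type*} [NormedAddCommGroup E] [NormedSpace ℝ E]
    (ψ : E → ℝ) (ψ' : E → E →L[ℝ] ℝ) (x y : E) : ℝ :=
  ψ x - ψ y - ψ' y (x - y)

/-- `g` is a subgradient of `f` at `x` relative to `Q`:
`f(x) + ⟨g, y − x⟩ ≤ f(y)` for all `y ∈ Q`. -/
def IsSubgradientAt {E : Type*} [NormedAddCommGroup E] [NormedSpace ℝ E]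
    (f : E → ℝ) (Q : Set E) (g : E →L[ℝ] ℝ) (x : E) : Prop :=
  ∀ y ∈ Q, f x + g (y - x) ≤ f y

/-!
Optimality of the step, together with the three-point identity for the Bregman divergence, gives
`⟨g, x⁺ - u⟩ ≤ (1/γ) (V(u, x) - V(u, x⁺) - V(x⁺, x))` for every `u ∈ Q`. The remaining part
`⟨g, x - x⁺⟩` of the linearization `⟨g, x - u⟩` is split by Young's inequality into
`γ/(2σ) ‖g‖²` and `σ/(2γ) ‖x - x⁺‖²`, and the latter is absorbed by `-(1/γ) V(x⁺, x)` because
strong convexity gives `V(x⁺, x) ≥ σ/2 ‖x⁺ - x‖²`.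
-/

open Filter Set Topology

section FirstOrder

variable {E F : Type*} [NormedAddCommGroup E] [NormedSpace ℝ E]
  [NormedAddCommGroup F] [NormedSpace ℝ F] {Q : Set E} {x y : E}

theorem tendsto_slope_segment_of_hasFDerivWithinAt {f : E → F} {f' : E →L[ℝ] F}
    (hf : HasFDerivWithinAt f f' Q x) (hxy : segment ℝ x y ⊆ Q) :
    Tendsto (fun t : ℝ ↦ t⁻¹ • (f (x + t • (y - x)) - f x)) (𝓝[>] 0) (𝓝 (f' (y - x))) := by
  have hpos : ∀ᶠ t : ℝ in 𝓝[>] 0, t ∈ Ioo 0 1 := Ioo_mem_nhdsGT one_pos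
  refine hf.lim ?_ ?_ ?_
  · have hcont : Continuous fun t : ℝ ↦ t • (y - x) := by fun_prop
    exact (hcont.tendsto' 0 0 (zero_smul ℝ _)).mono_left nhdsWithin_le_nhds
  · filter_upwards [hpos] with t ht
    rw [segment_eq_image'] at hxy
    exact hxy (mem_image_of_mem _ (Ioo_subset_Icc_self ht))
  · refine tendsto_const_nhds.congr' ?_
    filter_upwards [hpos] with t ht
    rw [inv_smul_smul₀ ht.1.ne']

theorem le_add_apply_sub_of_isMinOn_add {h φ : E → ℝ} {φ' : E →L[ℝ] ℝ} (hh : ConvexOn ℝ Q h)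
    (hφ : HasFDerivWithinAt φ φ' Q x) (hx : x ∈ Q) (hy : y ∈ Q)
    (hmin : IsMinOn (fun z ↦ h z + φ z) Q x) : h x ≤ h y + φ' (y - x) := by
  suffices h x - h y ≤ φ' (y - x) by linarith
  refine ge_of_tendsto
    (tendsto_slope_segment_of_hasFDerivWithinAt hφ (hh.1.segment_subset hx hy)) ?_
  filter_upwards [Ioo_mem_nhdsGT one_pos] with t ⟨ht₀, ht₁⟩
  have hle : h x + φ x ≤ h (x + t • (y - x)) + φ (x + t • (y - x)) :=
    hmin (hh.1.add_smul_sub_mem hx hy ⟨ht₀.le, ht₁.le⟩)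
  have hconv : h (x + t • (y - x)) ≤ (1 - t) * h x + t * h y := by
    rw [show x + t • (y - x) = (1 - t) • x + t • y by module]
    exact hh.2 hx hy (sub_nonneg.2 ht₁.le) ht₀.le (sub_add_cancel 1 t)
  rw [smul_eq_mul, le_inv_mul_iff₀ ht₀]
  linarith

end FirstOrder

section Bregman

variable {E : Type*} [NormedAddCommGroup E] [NormedSpace ℝ E] {Q : Set E}
  {ψ : E → ℝ} {ψ' : E → E →L[ℝ] ℝ} {x y u : E}

theorem bregman_sub_bregman_sub_bregman (ψ : E → ℝ) (ψ' : E → E →L[ℝ] ℝ) (u x y : E) :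
    bregman ψ ψ' u x - bregman ψ ψ' u y - bregman ψ ψ' y x = (ψ' y - ψ' x) (u - y) := by
  simp only [bregman, map_sub, sub_apply]
  ring

theorem hasFDerivWithinAt_bregman_left {ψ₀ : E →L[ℝ] ℝ} (hψ : HasFDerivWithinAt ψ ψ₀ Q y) :
    HasFDerivWithinAt (fun z ↦ bregman ψ ψ' z x) (ψ₀ - ψ' x) Q y :=
  (hψ.sub_const (ψ x)).sub
    ((ψ' x).hasFDerivAt.comp y ((hasFDerivAt_id y).sub_const x)).hasFDerivWithinAt

theorem le_bregman_of_uniformConvexOn {φ : ℝ → ℝ} (hψ : UniformConvexOn Q φ ψ)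
    (hψx : HasFDerivWithinAt ψ (ψ' x) Q x) (hx : x ∈ Q) (hy : y ∈ Q) :
    φ ‖x - y‖ ≤ bregman ψ ψ' y x := by
  suffices ψ' x (y - x) ≤ ψ y - ψ x - φ ‖x - y‖ by
    unfold bregman
    linarith
  have hbound : Tendsto (fun t : ℝ ↦ ψ y - ψ x - (1 - t) * φ ‖x - y‖) (𝓝[>] 0)
      (𝓝 (ψ y - ψ x - φ ‖x - y‖)) := by
    have hcont : Continuous fun t : ℝ ↦ ψ y - ψ x - (1 - t) * φ ‖x - y‖ := by fun_prop
    exact (hcont.tendsto' 0 _ (by ring)).mono_left nhdsWithin_le_nhds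
  refine le_of_tendsto_of_tendsto
    (tendsto_slope_segment_of_hasFDerivWithinAt hψx (hψ.1.segment_subset hx hy)) hbound ?_
  filter_upwards [Ioo_mem_nhdsGT one_pos] with t ⟨ht₀, ht₁⟩
  have hconv : ψ (x + t • (y - x)) ≤ (1 - t) * ψ x + t * ψ y - (1 - t) * t * φ ‖x - y‖ := by
    rw [show x + t • (y - x) = (1 - t) • x + t • y by module]
    exact hψ.2 hx hy (sub_nonneg.2 ht₁.le) ht₀.le (sub_add_cancel 1 t)
  rw [smul_eq_mul, inv_mul_le_iff₀ ht₀]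
  linarith

theorem add_bregman_le_of_isMinOn_add_mul_bregman {h : E → ℝ} {c : ℝ} (hh : ConvexOn ℝ Q h)
    (hψ : HasFDerivWithinAt ψ (ψ' y) Q y) (hy : y ∈ Q) (hu : u ∈ Q)
    (hmin : IsMinOn (fun z ↦ h z + c * bregman ψ ψ' z x) Q y) :
    h y + c * (bregman ψ ψ' y x + bregman ψ ψ' u y) ≤ h u + c * bregman ψ ψ' u x := by
  have hopt : h y ≤ h u + c * (ψ' y - ψ' x) (u - y) :=
    le_add_apply_sub_of_isMinOn_add hh ((hasFDerivWithinAt_bregman_left hψ).const_mul c) hy hu hmin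
  rw [← bregman_sub_bregman_sub_bregman] at hopt
  linarith

end Bregman

theorem two_mul_apply_le_mul_sq_norm_add {E : Type*} [SeminormedAddCommGroup E] [NormedSpace ℝ E]
    (g : E →L[ℝ] ℝ) (v : E) {ε : ℝ} (hε : 0 < ε) :
    2 * g v ≤ ε * ‖g‖ ^ 2 + ε⁻¹ * ‖v‖ ^ 2 :=
  calc
    2 * g v ≤ 2 * (‖g‖ * ‖v‖) := by gcongr; exact (le_abs_self _).trans (g.le_opNorm v)
    _ = 2 * ‖g‖ * ‖v‖ := (mul_assoc _ _ _).symm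
    _ ≤ ε * ‖g‖ ^ 2 + ε⁻¹ * ‖v‖ ^ 2 := two_mul_le_add_mul_sq hε

theorem mirror_descent_per_iteration_general
    {E : Type*} [NormedAddCommGroup E] [NormedSpace ℝ E] {Q : Set E}
    {ψ : E → ℝ} {ψ' : E → E →L[ℝ] ℝ} {σ γ : ℝ} (hσ : 0 < σ) (hγ : 0 < γ)
    (hψ : StrongConvexOn Q σ ψ) {f : E → ℝ} {g : E →L[ℝ] ℝ} {x y u : E}
    (hx : x ∈ Q) (hy : y ∈ Q) (hu : u ∈ Q)
    (hψx : HasFDerivWithinAt ψ (ψ' x) Q x) (hψy : HasFDerivWithinAt ψ (ψ' y) Q y)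
    (hg : IsSubgradientAt f Q g x)
    (hstep : IsMinOn (fun z ↦ g z + (1 / γ) * bregman ψ ψ' z x) Q y) :
    f x - f u ≤
      (1 / γ) * (bregman ψ ψ' u x - bregman ψ ψ' u y) + γ / (2 * σ) * ‖g‖ ^ 2 := by
  have hsub : f x + (g u - g x) ≤ f u := map_sub g u x ▸ hg u hu
  have hprox : g y + (1 / γ) * (bregman ψ ψ' y x + bregman ψ ψ' u y)
      ≤ g u + (1 / γ) * bregman ψ ψ' u x :=
    add_bregman_le_of_isMinOn_add_mul_bregman (g.toLinearMap.convexOn hψ.1) hψy hy hu hstep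
  have hstrong : (1 / γ) * (σ / 2 * ‖x - y‖ ^ 2) ≤ (1 / γ) * bregman ψ ψ' y x := by
    gcongr
    exact le_bregman_of_uniformConvexOn hψ hψx hx hy
  have hyoung : g x - g y ≤ γ / (2 * σ) * ‖g‖ ^ 2 + (1 / γ) * (σ / 2 * ‖x - y‖ ^ 2) :=
    calc
      g x - g y = 2 * g (x - y) / 2 := by rw [map_sub]; ring
      _ ≤ (γ / σ * ‖g‖ ^ 2 + (γ / σ)⁻¹ * ‖x - y‖ ^ 2) / 2 := by
        gcongr
        exact two_mul_apply_le_mul_sq_norm_add g (x - y) (div_pos hγ hσ)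
      _ = γ / (2 * σ) * ‖g‖ ^ 2 + (1 / γ) * (σ / 2 * ‖x - y‖ ^ 2) := by field_simp
  linarith

/-- **Per-iteration inequality of mirror descent.** With `x^{k+1}` the mirror descent step from
`x^k` with step size `γ_k > 0` and subgradient `∇f(x^k)`,
`f(x^k) − f(x*) ≤ (1/γ_k)(V_ψ(x*, x^k) − V_ψ(x*, x^{k+1})) + (γ_k/(2σ))‖∇f(x^k)‖_*²`. -/
theorem mirror_descent_per_iteration
    {E : Type*} [NormedAddCommGroup E] [NormedSpace ℝ E] [FiniteDimensional ℝ E]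
    (Q : Set E) (hQcomp : IsCompact Q) (hQconv : Convex ℝ Q)
    (ψ : E → ℝ) (ψ' : E → E →L[ℝ] ℝ) (σ : ℝ) (hσ : 0 < σ)
    (hψdiff : ∀ x ∈ Q, HasFDerivWithinAt ψ (ψ' x) Q x)
    (hψstrong : StrongConvexOn Q σ ψ)
    (f : E → ℝ) (hfconv : ConvexOn ℝ Q f) (hfcont : ContinuousOn f Q)
    (xstar : E) (hxstarQ : xstar ∈ Q) (hxstar : IsMinOn f Q xstar)
    (γk : ℝ) (hγk : 0 < γk)
    (xk : E) (hxkQ : xk ∈ Q)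
    (gk : E →L[ℝ] ℝ) (hgk : IsSubgradientAt f Q gk xk)
    (xk1 : E) (hxk1Q : xk1 ∈ Q)
    (hstep : IsMinOn (fun x => gk x + (1 / γk) * bregman ψ ψ' x xk) Q xk1) :
    f xk - f xstar ≤
      (1 / γk) * (bregman ψ ψ' xstar xk - bregman ψ ψ' xstar xk1)
        + γk / (2 * σ) * ‖gk‖ ^ 2 :=
  mirror_descent_per_iteration_general hσ hγk hψstrong hxkQ hxk1Q hxstarQ (hψdiff xk hxkQ)
    (hψdiff xk1 hxk1Q) hgk hstep
end

section
/- Let a ∈ [0, 1], m > 0, σ > 0, R > 0, and g_1, …, g_N positive reals. Set G_k = max_{j=1,…,k} { g_j · j^{(1−a)/2} } and γ_k = √(2σR)/(G_k k^{a/2}). Then ( R · N^{m/2} / γ_N + ∑_{k=1}^N (k^{m/2} γ_k/(2σ)) g_k² ) / ( ∑_{k=1}^N k^{m/2} ) ≤ √(R/(2σ)) · ( N^{(m+1)/2} + ∑_{k=1}^N k^{(m−1)/2} ) / ( ∑_{k=1}^N k^{m/2} ) · max_{k=1,…,N} g_k. -/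
/-!
The step sizes `γ_k = √(2σR) / (G_k k^{a/2})` are trapped between `√(2σR) / (√k · max g)` and
`√(2σR) / (g_k √k)`, because `g_k √k ≤ G_k k^{a/2} ≤ √k · max g`. The lower bound at `k = N`
controls the term `R N^{m/2} / γ_N`, the upper bounds control the terms of the sum, and both
produce the same constant since `R / √(2σR) = √(2σR) / (2σ) = √(R / (2σ))`.
-/

theorem sqrt_mul_div_self_left {c : ℝ} (hc : 0 ≤ c) (R : ℝ) : √(c * R) / c = √(R / c) := by
  rw [Real.sqrt_mul hc, Real.sqrt_div' R hc, mul_div_right_comm, Real.sqrt_div_self',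
    one_div_mul_eq_div]

theorem div_sqrt_mul_self_right {c : ℝ} (hc : 0 ≤ c) (R : ℝ) : R / √(c * R) = √(R / c) := by
  rw [Real.sqrt_mul hc, Real.sqrt_div' R hc, div_mul_eq_div_div_swap, Real.div_sqrt]

theorem rpow_one_sub_div_two_mul_rpow_div_two {x : ℝ} (hx : 0 < x) (a : ℝ) :
    x ^ ((1 - a) / 2) * x ^ (a / 2) = √x := by
  rw [← Real.rpow_add hx, Real.sqrt_eq_rpow]
  ring_nf

theorem rpow_div_two_mul_sqrt {x : ℝ} (hx : 0 < x) (m : ℝ) :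
    x ^ (m / 2) * √x = x ^ ((m + 1) / 2) := by
  rw [Real.sqrt_eq_rpow, ← Real.rpow_add hx, add_div]

theorem rpow_div_two_div_sqrt {x : ℝ} (hx : 0 < x) (m : ℝ) :
    x ^ (m / 2) / √x = x ^ ((m - 1) / 2) := by
  rw [Real.sqrt_eq_rpow, ← Real.rpow_sub hx, sub_div]

theorem sup'_Icc_mul_rpow_le {n : ℕ} (hn : (Finset.Icc 1 n).Nonempty) {g : ℕ → ℝ}
    (hg : ∀ j ∈ Finset.Icc 1 n, 0 ≤ g j) {p : ℝ} (hp : 0 ≤ p) :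
    (Finset.Icc 1 n).sup' hn (fun j => g j * (j : ℝ) ^ p)
      ≤ (Finset.Icc 1 n).sup' hn g * (n : ℝ) ^ p := by
  refine Finset.sup'_le _ _ fun j hj => ?_
  have hjn : (j : ℝ) ≤ n := mod_cast (Finset.mem_Icc.mp hj).2
  have hpow : (j : ℝ) ^ p ≤ (n : ℝ) ^ p := Real.rpow_le_rpow j.cast_nonneg hjn hp
  exact mul_le_mul_of_nonneg (Finset.le_sup' g hj) hpow (hg j hj) (by positivity)

theorem mul_sqrt_le_sup'_Icc_mul_rpow (g : ℕ → ℝ) (a : ℝ) {n : ℕ} (hn : 1 ≤ n) :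
    g n * √n ≤ (Finset.Icc 1 n).sup' (Finset.nonempty_Icc.mpr hn)
      (fun j => g j * (j : ℝ) ^ ((1 - a) / 2)) * (n : ℝ) ^ (a / 2) := by
  rw [← rpow_one_sub_div_two_mul_rpow_div_two (mod_cast hn) a, ← mul_assoc]
  gcongr
  exact Finset.le_sup' (fun j : ℕ => g j * (j : ℝ) ^ ((1 - a) / 2))
    (Finset.right_mem_Icc.mpr hn)

theorem sup'_Icc_mul_rpow_le_sup'_mul_sqrt {n : ℕ} (hn : 1 ≤ n) {g : ℕ → ℝ}
    (hg : ∀ j ∈ Finset.Icc 1 n, 0 ≤ g j) {a : ℝ} (ha : a ≤ 1) :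
    (Finset.Icc 1 n).sup' (Finset.nonempty_Icc.mpr hn)
        (fun j => g j * (j : ℝ) ^ ((1 - a) / 2)) * (n : ℝ) ^ (a / 2)
      ≤ (Finset.Icc 1 n).sup' (Finset.nonempty_Icc.mpr hn) g * √n := by
  rw [← rpow_one_sub_div_two_mul_rpow_div_two (mod_cast hn) a, ← mul_assoc]
  gcongr
  exact sup'_Icc_mul_rpow_le _ hg (by linarith)

section StepSizeBounds

variable {c R M : ℝ}

theorem mul_div_stepSize_le {w r γ : ℝ} (hc : 0 < c) (hR : 0 < R) (hM : 0 < M) (hw : 0 ≤ w)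
    (hr : 0 < r) (hγ : √(c * R) / (M * r) ≤ γ) :
    R * w / γ ≤ √(R / c) * (w * r) * M :=
  calc R * w / γ ≤ R * w / (√(c * R) / (M * r)) := by gcongr
    _ = R / √(c * R) * (w * r) * M := by field_simp
    _ = √(R / c) * (w * r) * M := by rw [div_sqrt_mul_self_right hc.le]

theorem mul_stepSize_div_mul_sq_le {w r g γ : ℝ} (hc : 0 < c) (hw : 0 ≤ w) (hr : 0 < r)
    (hg : 0 < g) (hgM : g ≤ M) (hγ : γ ≤ √(c * R) / (g * r)) :
    w * γ / c * g ^ 2 ≤ √(R / c) * (w / r) * M :=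
  calc w * γ / c * g ^ 2 ≤ w * (√(c * R) / (g * r)) / c * g ^ 2 := by gcongr
    _ = √(c * R) / c * (w / r) * g := by field_simp
    _ = √(R / c) * (w / r) * g := by rw [sqrt_mul_div_self_left hc.le]
    _ ≤ √(R / c) * (w / r) * M := by gcongr

theorem mul_div_stepSize_add_sum_le {ι : Type*} {s : Finset ι} {n : ι} {w r g γ : ι → ℝ}
    (hn : n ∈ s) (hc : 0 < c) (hR : 0 < R) (hw : ∀ k ∈ s, 0 ≤ w k) (hr : ∀ k ∈ s, 0 < r k)
    (hg : ∀ k ∈ s, 0 < g k) (hgM : ∀ k ∈ s, g k ≤ M)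
    (hγ_lower : √(c * R) / (M * r n) ≤ γ n)
    (hγ_upper : ∀ k ∈ s, γ k ≤ √(c * R) / (g k * r k)) :
    R * w n / γ n + ∑ k ∈ s, w k * γ k / c * g k ^ 2
      ≤ √(R / c) * (w n * r n + ∑ k ∈ s, w k / r k) * M := by
  have hM : 0 < M := (hg n hn).trans_le (hgM n hn)
  calc R * w n / γ n + ∑ k ∈ s, w k * γ k / c * g k ^ 2
      ≤ √(R / c) * (w n * r n) * M + ∑ k ∈ s, √(R / c) * (w k / r k) * M :=
        add_le_add (mul_div_stepSize_le hc hR hM (hw n hn) (hr n hn) hγ_lower)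
          (Finset.sum_le_sum fun k hk => mul_stepSize_div_mul_sq_le hc (hw k hk) (hr k hk)
            (hg k hk) (hgM k hk) (hγ_upper k hk))
    _ = √(R / c) * (w n * r n + ∑ k ∈ s, w k / r k) * M := by
        rw [← Finset.sum_mul, ← Finset.mul_sum, mul_add, add_mul]

end StepSizeBounds

theorem algebra_estimate_m_pos_general
    (N : ℕ) (hN : 1 ≤ N) (a m σ R : ℝ)
    (ha1 : a ≤ 1) (hσ : 0 < σ) (hR : 0 < R)
    (g G γ : ℕ → ℝ)
    (hg : ∀ k, 1 ≤ k → k ≤ N → 0 < g k)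
    (hG : ∀ k (hk : 1 ≤ k), k ≤ N →
      G k = (Finset.Icc 1 k).sup' (Finset.nonempty_Icc.mpr hk)
        (fun j => g j * (j : ℝ) ^ ((1 - a) / 2)))
    (hγ : ∀ k, 1 ≤ k → k ≤ N →
      γ k = Real.sqrt (2 * σ * R) / (G k * (k : ℝ) ^ (a / 2))) :
    (R * (N : ℝ) ^ (m / 2) / γ N
        + ∑ k ∈ Finset.Icc 1 N, (k : ℝ) ^ (m / 2) * γ k / (2 * σ) * g k ^ 2)
      / (∑ k ∈ Finset.Icc 1 N, (k : ℝ) ^ (m / 2))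
    ≤ Real.sqrt (R / (2 * σ))
        * (((N : ℝ) ^ ((m + 1) / 2) + ∑ k ∈ Finset.Icc 1 N, (k : ℝ) ^ ((m - 1) / 2))
            / (∑ k ∈ Finset.Icc 1 N, (k : ℝ) ^ (m / 2)))
        * (Finset.Icc 1 N).sup' (Finset.nonempty_Icc.mpr hN) g := by
  set M := (Finset.Icc 1 N).sup' (Finset.nonempty_Icc.mpr hN) g
  have hpos : ∀ k ∈ Finset.Icc 1 N, (0 : ℝ) < k := fun k hk =>
    mod_cast (Finset.mem_Icc.mp hk).1
  have hsqrt : ∀ k ∈ Finset.Icc 1 N, 0 < √(k : ℝ) := fun k hk => Real.sqrt_pos.mpr (hpos k hk)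
  have hg_pos : ∀ k ∈ Finset.Icc 1 N, 0 < g k := fun k hk =>
    hg k (Finset.mem_Icc.mp hk).1 (Finset.mem_Icc.mp hk).2
  have hN_mem : N ∈ Finset.Icc 1 N := Finset.right_mem_Icc.mpr hN
  have hscale_lower : ∀ k ∈ Finset.Icc 1 N, g k * √k ≤ G k * (k : ℝ) ^ (a / 2) := fun k hk => by
    obtain ⟨hk1, hkN⟩ := Finset.mem_Icc.mp hk
    exact hG k hk1 hkN ▸ mul_sqrt_le_sup'_Icc_mul_rpow g a hk1
  have hscale_upper : G N * (N : ℝ) ^ (a / 2) ≤ M * √N :=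
    hG N hN le_rfl ▸
      sup'_Icc_mul_rpow_le_sup'_mul_sqrt hN (fun j hj => (hg_pos j hj).le) ha1
  have hγ_upper : ∀ k ∈ Finset.Icc 1 N, γ k ≤ √(2 * σ * R) / (g k * √k) := fun k hk => by
    obtain ⟨hk1, hkN⟩ := Finset.mem_Icc.mp hk
    exact hγ k hk1 hkN ▸ div_le_div_of_nonneg_left (Real.sqrt_nonneg _)
      (mul_pos (hg_pos k hk) (hsqrt k hk)) (hscale_lower k hk)
  have hγ_lower : √(2 * σ * R) / (M * √N) ≤ γ N :=
    hγ N hN le_rfl ▸ div_le_div_of_nonneg_left (Real.sqrt_nonneg _)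
      ((mul_pos (hg_pos N hN_mem) (hsqrt N hN_mem)).trans_le (hscale_lower N hN_mem))
      hscale_upper
  have hnum := mul_div_stepSize_add_sum_le (w := fun k : ℕ => (k : ℝ) ^ (m / 2)) hN_mem
    (mul_pos two_pos hσ) hR (fun k _ => by positivity) hsqrt hg_pos
    (fun k hk => Finset.le_sup' g hk) hγ_lower hγ_upper
  rw [rpow_div_two_mul_sqrt (hpos N hN_mem),
    Finset.sum_congr rfl fun k hk => rpow_div_two_div_sqrt (hpos k hk) m] at hnum
  rw [mul_div_assoc', div_mul_eq_mul_div]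
  gcongr

/-- The algebraic estimate of the main convergence theorem in the case `m > 0`,
with `G_k = max_{j=1,…,k}{ g_j · j^{(1−a)/2} }` and `γ_k = √(2σR)/(G_k k^{a/2})`:
`(R N^{m/2}/γ_N + ∑ k^{m/2} γ_k g_k²/(2σ)) / (∑ k^{m/2})
  ≤ √(R/(2σ)) · (N^{(m+1)/2} + ∑ k^{(m−1)/2}) / (∑ k^{m/2}) · max_k g_k`. -/
theorem algebra_estimate_m_pos
    (N : ℕ) (hN : 1 ≤ N) (a m σ R : ℝ)
    (ha0 : 0 ≤ a) (ha1 : a ≤ 1) (hm : 0 < m)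
    (hσ : 0 < σ) (hR : 0 < R)
    (g G γ : ℕ → ℝ)
    (hg : ∀ k, 1 ≤ k → k ≤ N → 0 < g k)
    (hG : ∀ k (hk : 1 ≤ k), k ≤ N →
      G k = (Finset.Icc 1 k).sup' (Finset.nonempty_Icc.mpr hk)
        (fun j => g j * (j : ℝ) ^ ((1 - a) / 2)))
    (hγ : ∀ k, 1 ≤ k → k ≤ N →
      γ k = Real.sqrt (2 * σ * R) / (G k * (k : ℝ) ^ (a / 2))) :
    (R * (N : ℝ) ^ (m / 2) / γ N
        + ∑ k ∈ Finset.Icc 1 N, (k : ℝ) ^ (m / 2) * γ k / (2 * σ) * g k ^ 2)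
      / (∑ k ∈ Finset.Icc 1 N, (k : ℝ) ^ (m / 2))
    ≤ Real.sqrt (R / (2 * σ))
        * (((N : ℝ) ^ ((m + 1) / 2) + ∑ k ∈ Finset.Icc 1 N, (k : ℝ) ^ ((m - 1) / 2))
            / (∑ k ∈ Finset.Icc 1 N, (k : ℝ) ^ (m / 2)))
        * (Finset.Icc 1 N).sup' (Finset.nonempty_Icc.mpr hN) g :=
  algebra_estimate_m_pos_general N hN a m σ R ha1 hσ hR g G γ hg hG hγ
end

section
/- (Corollary 1, optimal rate of Lipschitz-free mirror descent) Under the setting of Theorem 1 with m = 0 and any fixed a ∈ [0, 1] (i.e., x^1 ∈ Q, ∇f(x^k) ∈ ∂f(x^k), G_k = max_{j=1,…,k}{ ‖∇f(x^j)‖_* j^{(1−a)/2} }, γ_k = √(2σR)/(G_k k^{a/2}), x^{k+1} = argmin_{x ∈ Q} { ⟨∇f(x^k), x⟩ + (1/γ_k) V_ψ(x, x^k) }, and V_ψ(x*, x) ≤ R for all x ∈ Q), the uniform average satisfies f( (1/N) ∑_{k=1}^N x^k ) − f(x*) ≤ 3 √(R/(2σ)) · (1/√N) · max_{k=1,…,N}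 ‖∇f(x^k)‖_*. -/
/-!
The optimality condition for a mirror descent step and the three-point identity for the Bregman
divergence `V` give `⟨gₖ, xₖ₊₁ - z⟩ ≤ (V(z, xₖ) - V(z, xₖ₊₁) - V(xₖ₊₁, xₖ)) / γₖ`. Replacing `xₖ₊₁`
by `xₖ` on the left costs at most `γₖ ‖gₖ‖² / (2σ) + V(xₖ₊₁, xₖ) / γₖ`, by Young's inequality and
strong convexity. As `1 / γₖ` increases and `V(z, ·) ≤ R`, Abel summation bounds the regret by
`R / γ_N + ∑ γₖ ‖gₖ‖² / (2σ)`.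

The step size is `γₖ = √(2σR) / Dₖ`, where `Dₖ = Gₖ k ^ (a / 2)` lies between `‖gₖ‖ √k` and `M √k`
for `M = max ‖gₖ‖`. So `γₖ ‖gₖ‖² ≤ √(2σR) ‖gₖ‖ / √k` without any Lipschitz constant, and
`∑ 1 / √k ≤ 2 √N`: the two parts of the regret are at most one and two times
`√(R / (2σ)) M √N`.
-/

open Finset Filter Topology

section Bregman

variable {E : Type*} [NormedAddCommGroup E] [NormedSpace ℝ E] {Q : Set E} {ψ : E → ℝ}
  {ψ' : E → E →L[ℝ] ℝ} {x u z : E}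

lemma bregman_three_point (ψ : E → ℝ) (ψ' : E → E →L[ℝ] ℝ) (x u z : E) :
    bregman ψ ψ' z x = bregman ψ ψ' z u + bregman ψ ψ' u x + (ψ' u - ψ' x) (z - u) := by
  simp only [bregman, sub_apply, map_sub]
  ring

lemma hasFDerivWithinAt_bregman (hψ : HasFDerivWithinAt ψ (ψ' u) Q u) (x : E) :
    HasFDerivWithinAt (fun w => bregman ψ ψ' w x) (ψ' u - ψ' x) Q u :=
  (hψ.sub_const (ψ x)).sub <| (ψ' x).hasFDerivWithinAt.comp u
    ((hasFDerivWithinAt_id u Q).sub_const x) (Set.mapsTo_univ _ _)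

lemma modulus_le_bregman {φ : ℝ → ℝ} (hψ : UniformConvexOn Q φ ψ) (hx : x ∈ Q) (hz : z ∈ Q)
    (hψ' : HasFDerivWithinAt ψ (ψ' x) Q x) : φ ‖z - x‖ ≤ bregman ψ ψ' z x := by
  have hmaps : Set.Ioi 0 ∩ Set.Iio 1 ⊆ (fun t : ℝ => x + t • (z - x)) ⁻¹' Q := fun t ht =>
    hψ.1.add_smul_sub_mem hx hz ⟨ht.1.le, ht.2.le⟩
  have hslope : Tendsto (slope (fun t : ℝ => ψ (x + t • (z - x))) 0) (𝓝[>] 0)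
      (𝓝 (ψ' x (z - x))) := by
    rw [← nhdsWithin_Ioo_eq_nhdsGT zero_lt_one]
    exact (hasDerivWithinAt_iff_tendsto_slope' (by simp)).1
      (HasDerivWithinAt.mono (hψ'.hasLineDerivWithinAt (z - x)) hmaps)
  have hbound : Tendsto (fun t : ℝ => ψ z - ψ x - (1 - t) * φ ‖z - x‖) (𝓝[>] 0)
      (𝓝 (ψ z - ψ x - φ ‖z - x‖)) :=
    (Continuous.tendsto' (by fun_prop) _ _ (by ring)).mono_left nhdsWithin_le_nhds
  have hle : ∀ᶠ t in 𝓝[>] (0 : ℝ), slope (fun t : ℝ => ψ (x + t • (z - x))) 0 t ≤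
      ψ z - ψ x - (1 - t) * φ ‖z - x‖ := by
    filter_upwards [Ioo_mem_nhdsGT zero_lt_one] with t ht
    have hconv := hψ.2 hx hz (sub_nonneg.2 ht.2.le) ht.1.le (sub_add_cancel 1 t)
    rw [show (1 - t) • x + t • z = x + t • (z - x) by module, norm_sub_rev] at hconv
    simp only [smul_eq_mul] at hconv
    rw [slope_def_field, zero_smul, add_zero, sub_zero, div_le_iff₀ ht.1]
    linarith
  have hlimit := le_of_tendsto_of_tendsto hslope hbound hle
  unfold bregman
  linarith

lemma half_mul_sq_norm_le_bregman {σ : ℝ} (hψ : StrongConvexOn Q σ ψ) (hx : x ∈ Q) (hz : z ∈ Q)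
    (hψ' : HasFDerivWithinAt ψ (ψ' x) Q x) : σ / 2 * ‖z - x‖ ^ 2 ≤ bregman ψ ψ' z x :=
  modulus_le_bregman hψ hx hz hψ'

lemma bregman_nonneg (hψ : ConvexOn ℝ Q ψ) (hx : x ∈ Q) (hz : z ∈ Q)
    (hψ' : HasFDerivWithinAt ψ (ψ' x) Q x) : 0 ≤ bregman ψ ψ' z x :=
  modulus_le_bregman (uniformConvexOn_zero.2 hψ) hx hz hψ'

end Bregman

section MirrorDescentStep

variable {E : Type*} [NormedAddCommGroup E] [NormedSpace ℝ E] {Q : Set E} {ψ : E → ℝ}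
  {ψ' : E → E →L[ℝ] ℝ} {g : E →L[ℝ] ℝ} {γ : ℝ} {x u z : E}

/-- `u` is a mirror descent step from `x` against the (sub)gradient `g` with step size `γ`: it
attains `argmin_{w ∈ Q} {⟨g, w⟩ + (1/γ) V_ψ(w, x)}`. This is a relation rather than a function of
`x`, so that neither existence nor uniqueness of the minimizer is built in. -/
def IsMirrorDescentStep (ψ : E → ℝ) (ψ' : E → E →L[ℝ] ℝ) (Q : Set E) (g : E →L[ℝ] ℝ) (γ : ℝ)
    (x u : E) : Prop :=
  u ∈ Q ∧ IsMinOn (fun w => g w + (1 / γ) * bregman ψ ψ' w x) Q u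

lemma IsMirrorDescentStep.apply_sub_le_bregman (hstep : IsMirrorDescentStep ψ ψ' Q g γ x u)
    (hQ : Convex ℝ Q) (hψ' : HasFDerivWithinAt ψ (ψ' u) Q u) (hz : z ∈ Q) :
    g (u - z) ≤ 1 / γ * (bregman ψ ψ' z x - bregman ψ ψ' z u - bregman ψ ψ' u x) := by
  have hderiv : HasFDerivWithinAt (fun w => g w + 1 / γ * bregman ψ ψ' w x)
      (g + (1 / γ) • (ψ' u - ψ' x)) Q u :=
    g.hasFDerivWithinAt.add ((hasFDerivWithinAt_bregman hψ' x).const_mul (1 / γ))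
  have hoptimal : 0 ≤ (g + (1 / γ) • (ψ' u - ψ' x)) (z - u) :=
    hstep.2.localize.hasFDerivWithinAt_nonneg hderiv
      (sub_mem_posTangentConeAt_of_segment_subset (hQ.segment_subset hstep.1 hz))
  calc g (u - z) ≤ 1 / γ * (ψ' u - ψ' x) (z - u) := by
        rw [← neg_sub z u, map_neg, neg_le_iff_add_nonneg']
        exact hoptimal
    _ = 1 / γ * (bregman ψ ψ' z x - bregman ψ ψ' z u - bregman ψ ψ' u x) := by
        rw [bregman_three_point ψ ψ' x u z]
        ring

lemma apply_le_sq_norm_add_sq_norm (g : E →L[ℝ] ℝ) (v : E) {c : ℝ} (hc : 0 < c) :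
    g v ≤ ‖g‖ ^ 2 / (2 * c) + c / 2 * ‖v‖ ^ 2 := by
  have hsq : ‖g‖ ^ 2 / (2 * c) + c / 2 * ‖v‖ ^ 2 - ‖g‖ * ‖v‖ =
      (‖g‖ - c * ‖v‖) ^ 2 / (2 * c) := by
    field_simp
    ring
  have hnonneg : 0 ≤ (‖g‖ - c * ‖v‖) ^ 2 / (2 * c) := by positivity
  calc g v ≤ ‖g‖ * ‖v‖ := (le_abs_self _).trans (g.le_opNorm v)
    _ ≤ ‖g‖ ^ 2 / (2 * c) + c / 2 * ‖v‖ ^ 2 := by linarith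

lemma IsMirrorDescentStep.apply_sub_le (hstep : IsMirrorDescentStep ψ ψ' Q g γ x u) {σ : ℝ}
    (hσ : 0 < σ) (hγ : 0 < γ) (hψ : StrongConvexOn Q σ ψ) (hx : x ∈ Q)
    (hψx : HasFDerivWithinAt ψ (ψ' x) Q x) (hψu : HasFDerivWithinAt ψ (ψ' u) Q u) (hz : z ∈ Q) :
    g (x - z) ≤
      1 / γ * (bregman ψ ψ' z x - bregman ψ ψ' z u) + γ * ‖g‖ ^ 2 / (2 * σ) := by
  have hmove : g (x - u) ≤ γ * ‖g‖ ^ 2 / (2 * σ) + 1 / γ * bregman ψ ψ' u x :=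
    calc g (x - u) ≤ ‖g‖ ^ 2 / (2 * (σ / γ)) + σ / γ / 2 * ‖x - u‖ ^ 2 :=
          apply_le_sq_norm_add_sq_norm g (x - u) (div_pos hσ hγ)
      _ = γ * ‖g‖ ^ 2 / (2 * σ) + 1 / γ * (σ / 2 * ‖u - x‖ ^ 2) := by
          rw [norm_sub_rev x u]
          field_simp
      _ ≤ γ * ‖g‖ ^ 2 / (2 * σ) + 1 / γ * bregman ψ ψ' u x := by
          gcongr
          exact half_mul_sq_norm_le_bregman hψ hx hstep.1 hψx
  have hprox := hstep.apply_sub_le_bregman hψ.1 hψu hz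
  rw [← sub_add_sub_cancel x u z, map_add]
  linarith

end MirrorDescentStep

section Sums

lemma mem_of_succ_mem {α : Type*} {Q : Set α} {x : ℕ → α} {N : ℕ} (hx1 : x 1 ∈ Q)
    (hsucc : ∀ k, 1 ≤ k → k ≤ N → x (k + 1) ∈ Q) : ∀ k, 1 ≤ k → k ≤ N + 1 → x k ∈ Q
  | 1, _, _ => hx1
  | k + 2, _, hk => hsucc (k + 1) (by lia) (by lia)

lemma sum_mul_sub_succ_le {β V : ℕ → ℝ} {R : ℝ} {N : ℕ} (hN : 1 ≤ N) (hβ1 : 0 ≤ β 1)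
    (hβ : MonotoneOn β (Set.Icc 1 N)) (hV : ∀ k, 1 ≤ k → k ≤ N → V k ≤ R) :
    ∑ k ∈ Icc 1 N, β k * (V k - V (k + 1)) ≤ β N * (R - V (N + 1)) := by
  induction N, hN using Nat.le_induction with
  | base =>
    rw [Icc_self, sum_singleton]
    gcongr
    exact hV 1 le_rfl le_rfl
  | succ n hn ih =>
    have hprev := ih (hβ.mono (Set.Icc_subset_Icc_right n.le_succ))
      fun k hk hkn => hV k hk (hkn.trans n.le_succ)
    have hβn : β n ≤ β (n + 1) := hβ ⟨hn, n.le_succ⟩ ⟨by lia, le_rfl⟩ n.le_succ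
    have hVn : 0 ≤ R - V (n + 1) := sub_nonneg.2 (hV (n + 1) (by lia) le_rfl)
    calc ∑ k ∈ Icc 1 (n + 1), β k * (V k - V (k + 1))
        ≤ β n * (R - V (n + 1)) + β (n + 1) * (V (n + 1) - V (n + 1 + 1)) := by
          rw [sum_Icc_succ_top (by lia)]
          gcongr
      _ ≤ β (n + 1) * (R - V (n + 1)) + β (n + 1) * (V (n + 1) - V (n + 1 + 1)) := by gcongr
      _ = β (n + 1) * (R - V (n + 1 + 1)) := by ring

lemma one_div_sqrt_succ_le (n : ℕ) : 1 / √((n + 1 : ℕ) : ℝ) ≤ 2 * (√((n + 1 : ℕ) : ℝ) - √n) := by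
  have hpos : 0 < √((n + 1 : ℕ) : ℝ) := by positivity
  have hsucc : √((n + 1 : ℕ) : ℝ) ^ 2 = √n ^ 2 + 1 := by
    rw [Real.sq_sqrt (by positivity), Real.sq_sqrt (by positivity), Nat.cast_succ]
  rw [div_le_iff₀ hpos]
  linarith [sq_nonneg (√((n + 1 : ℕ) : ℝ) - √n)]

lemma sum_one_div_sqrt_le (n : ℕ) : ∑ k ∈ Icc 1 n, 1 / √(k : ℝ) ≤ 2 * √n := by
  induction n with
  | zero => simp
  | succ n ih =>
    rw [sum_Icc_succ_top (by lia)]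
    linarith [one_div_sqrt_succ_le n]

lemma sum_sq_div_le {b D : ℕ → ℝ} {M : ℝ} (hM : 0 ≤ M) {N : ℕ} (hb : ∀ k, 0 ≤ b k)
    (hbM : ∀ k, 1 ≤ k → k ≤ N → b k ≤ M) (hbD : ∀ k, 1 ≤ k → k ≤ N → b k * √k ≤ D k) :
    ∑ k ∈ Icc 1 N, b k ^ 2 / D k ≤ 2 * M * √N := by
  have hterm : ∀ k ∈ Icc 1 N, b k ^ 2 / D k ≤ M * (1 / √k) := by
    intro k hk
    obtain ⟨hk1, hkN⟩ := mem_Icc.1 hk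
    have hsqrt : 0 < √(k : ℝ) := Real.sqrt_pos.2 (Nat.cast_pos.2 hk1)
    have hD : 0 ≤ D k := (mul_nonneg (hb k) hsqrt.le).trans (hbD k hk1 hkN)
    calc b k ^ 2 / D k ≤ b k * (1 / √k) := by
          refine div_le_of_le_mul₀ hD (mul_nonneg (hb k) (by positivity)) ?_
          calc b k ^ 2 = b k * (1 / √k) * (b k * √k) := by field_simp
            _ ≤ b k * (1 / √k) * D k := by
              gcongr
              · exact mul_nonneg (hb k) (by positivity)
              · exact hbD k hk1 hkN
      _ ≤ M * (1 / √k) := by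
          gcongr
          exact hbM k hk1 hkN
  calc ∑ k ∈ Icc 1 N, b k ^ 2 / D k ≤ ∑ k ∈ Icc 1 N, M * (1 / √k) := sum_le_sum hterm
    _ = M * ∑ k ∈ Icc 1 N, 1 / √(k : ℝ) := (mul_sum ..).symm
    _ ≤ M * (2 * √N) := by
        gcongr
        exact sum_one_div_sqrt_le N
    _ = 2 * M * √N := by ring

end Sums

section AdaptiveScale

/-- The quantity `D_k = G_k k^{a/2}` with `G_k = max_{1 ≤ j ≤ k} b_j j^{(1-a)/2}`, where
`b_j = ‖∇f(x^j)‖_*`: the step sizes of Lipschitz-free mirror descent are `√(2σR) / D_k`. The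
proof of `1 ≤ k` is an argument because the maximum is a `Finset.sup'`. -/
noncomputable def adaptiveScale (b : ℕ → ℝ) (a : ℝ) (k : ℕ) (hk : 1 ≤ k) : ℝ :=
  (Icc 1 k).sup' (nonempty_Icc.mpr hk) (fun j => b j * (j : ℝ) ^ ((1 - a) / 2)) *
    (k : ℝ) ^ (a / 2)

lemma rpow_half_one_sub_mul_rpow_half {t : ℝ} (ht : 0 < t) (a : ℝ) :
    t ^ ((1 - a) / 2) * t ^ (a / 2) = √t := by
  rw [← Real.rpow_add ht, Real.sqrt_eq_rpow]
  ring_nf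

variable {b : ℕ → ℝ} {a : ℝ} {k l : ℕ}

lemma mul_sqrt_le_adaptiveScale (b : ℕ → ℝ) (a : ℝ) (hk : 1 ≤ k) :
    b k * √k ≤ adaptiveScale b a k hk := by
  rw [← rpow_half_one_sub_mul_rpow_half (Nat.cast_pos.2 hk) a, ← mul_assoc]
  unfold adaptiveScale
  gcongr
  exact le_sup' (fun j : ℕ => b j * (j : ℝ) ^ ((1 - a) / 2)) (right_mem_Icc.2 hk)

lemma adaptiveScale_le_mul_sqrt (ha : a ≤ 1) {M : ℝ} (hM : 0 ≤ M) (hk : 1 ≤ k)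
    (hb : ∀ j, 1 ≤ j → j ≤ k → b j ≤ M) : adaptiveScale b a k hk ≤ M * √k := by
  rw [← rpow_half_one_sub_mul_rpow_half (Nat.cast_pos.2 hk) a, ← mul_assoc]
  unfold adaptiveScale
  gcongr
  refine sup'_le _ _ fun j hj => ?_
  obtain ⟨hj1, hjk⟩ := mem_Icc.1 hj
  gcongr
  exact hb j hj1 hjk

lemma adaptiveScale_mono (ha : 0 ≤ a) (hb : 0 ≤ b 1) (hk : 1 ≤ k) (hkl : k ≤ l) :
    adaptiveScale b a k hk ≤ adaptiveScale b a l (hk.trans hkl) := by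
  have hsup : 0 ≤ (Icc 1 l).sup' (nonempty_Icc.mpr (hk.trans hkl))
      (fun j : ℕ => b j * (j : ℝ) ^ ((1 - a) / 2)) :=
    le_sup'_of_le _ (left_mem_Icc.2 (hk.trans hkl)) (by simpa using hb)
  unfold adaptiveScale
  gcongr

lemma adaptiveScale_pos (ha : 0 ≤ a) (hb : 0 < b 1) (hk : 1 ≤ k) : 0 < adaptiveScale b a k hk :=
  calc 0 < b 1 * √(1 : ℕ) := by simpa using hb
    _ ≤ adaptiveScale b a 1 le_rfl := mul_sqrt_le_adaptiveScale b a le_rfl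
    _ ≤ adaptiveScale b a k hk := adaptiveScale_mono ha hb.le le_rfl hk

end AdaptiveScale

section Regret

variable {E : Type*} [NormedAddCommGroup E] [NormedSpace ℝ E] {Q : Set E}

lemma map_sum_smul_sub_le_of_isSubgradientAt {ι : Type*} {s : Finset ι} {w : ι → ℝ} {f : E → ℝ}
    {x : ι → E} {g : ι → E →L[ℝ] ℝ} {z : E} (hf : ConvexOn ℝ Q f) (hw : ∀ i ∈ s, 0 ≤ w i)
    (hw1 : ∑ i ∈ s, w i = 1) (hx : ∀ i ∈ s, x i ∈ Q)
    (hg : ∀ i ∈ s, IsSubgradientAt f Q (g i) (x i)) (hz : z ∈ Q) :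
    f (∑ i ∈ s, w i • x i) - f z ≤ ∑ i ∈ s, w i * g i (x i - z) := by
  have hgap : ∀ i ∈ s, w i * (f (x i) - f z) ≤ w i * g i (x i - z) := by
    intro i hi
    have hsub := hg i hi z hz
    rw [← neg_sub, map_neg] at hsub
    exact mul_le_mul_of_nonneg_left (by linarith) (hw i hi)
  calc f (∑ i ∈ s, w i • x i) - f z ≤ ∑ i ∈ s, w i * f (x i) - f z :=
        sub_le_sub_right (hf.map_sum_le hw hw1 hx) _
    _ = ∑ i ∈ s, w i * (f (x i) - f z) := by
        simp only [mul_sub, sum_sub_distrib, ← sum_mul, hw1, one_mul]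
    _ ≤ ∑ i ∈ s, w i * g i (x i - z) := sum_le_sum hgap

lemma sqrt_two_mul_mul_div {σ : ℝ} (hσ : 0 < σ) (R : ℝ) :
    √(2 * σ * R) / (2 * σ) = √(R / (2 * σ)) := by
  rw [show R / (2 * σ) = 2 * σ * R / (2 * σ) ^ 2 by field_simp, Real.sqrt_div' _ (by positivity),
    Real.sqrt_sq (by positivity)]

lemma div_sqrt_two_mul_mul {σ : ℝ} (hσ : 0 < σ) (R : ℝ) :
    R / √(2 * σ * R) = √(R / (2 * σ)) :=
  calc R / √(2 * σ * R) = 2 * σ * R / √(2 * σ * R) / (2 * σ) := by field_simp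
    _ = √(2 * σ * R) / (2 * σ) := by rw [Real.div_sqrt]
    _ = √(R / (2 * σ)) := sqrt_two_mul_mul_div hσ R

variable {ψ : E → ℝ} {ψ' : E → E →L[ℝ] ℝ} {σ R : ℝ} {x : ℕ → E} {g : ℕ → E →L[ℝ] ℝ}
  {γ : ℕ → ℝ} {z : E} {N : ℕ}

lemma mirrorDescent_regret_le (hσ : 0 < σ) (hψ : StrongConvexOn Q σ ψ) (hN : 1 ≤ N)
    (hx1 : x 1 ∈ Q)
    (hψ' : ∀ k, 1 ≤ k → k ≤ N + 1 → HasFDerivWithinAt ψ (ψ' (x k)) Q (x k)) (hz : z ∈ Q)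
    (hR : ∀ k, 1 ≤ k → k ≤ N → bregman ψ ψ' z (x k) ≤ R)
    (hγ : ∀ k, 1 ≤ k → k ≤ N → 0 < γ k) (hγanti : AntitoneOn γ (Set.Icc 1 N))
    (hstep : ∀ k, 1 ≤ k → k ≤ N → IsMirrorDescentStep ψ ψ' Q (g k) (γ k) (x k) (x (k + 1))) :
    ∑ k ∈ Icc 1 N, g k (x k - z) ≤ R / γ N + ∑ k ∈ Icc 1 N, γ k * ‖g k‖ ^ 2 / (2 * σ) := by
  have hx := mem_of_succ_mem hx1 fun k hk hkN => (hstep k hk hkN).1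
  set V : ℕ → ℝ := fun k => bregman ψ ψ' z (x k)
  have hterm : ∀ k ∈ Icc 1 N, g k (x k - z) ≤
      1 / γ k * (V k - V (k + 1)) + γ k * ‖g k‖ ^ 2 / (2 * σ) := by
    intro k hk
    obtain ⟨hk1, hkN⟩ := mem_Icc.1 hk
    exact (hstep k hk1 hkN).apply_sub_le hσ (hγ k hk1 hkN) hψ (hx k hk1 (by lia))
      (hψ' k hk1 (by lia)) (hψ' (k + 1) (by lia) (by lia)) hz
  have hmono : MonotoneOn (fun k => 1 / γ k) (Set.Icc 1 N) := fun k hk l hl hkl =>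
    one_div_le_one_div_of_le (hγ l hl.1 hl.2) (hγanti hk hl hkl)
  have hlast : 0 ≤ V (N + 1) :=
    bregman_nonneg (strongConvexOn_zero.1 (hψ.mono hσ.le)) (hx _ (by lia) le_rfl) hz
      (hψ' _ (by lia) le_rfl)
  have hγN := hγ N hN le_rfl
  calc ∑ k ∈ Icc 1 N, g k (x k - z)
      ≤ ∑ k ∈ Icc 1 N, 1 / γ k * (V k - V (k + 1)) + ∑ k ∈ Icc 1 N, γ k * ‖g k‖ ^ 2 / (2 * σ) :=
        (sum_le_sum hterm).trans_eq sum_add_distrib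
    _ ≤ 1 / γ N * (R - V (N + 1)) + ∑ k ∈ Icc 1 N, γ k * ‖g k‖ ^ 2 / (2 * σ) := by
        gcongr
        exact sum_mul_sub_succ_le hN (one_div_nonneg.2 (hγ 1 le_rfl hN).le) hmono hR
    _ ≤ R / γ N + ∑ k ∈ Icc 1 N, γ k * ‖g k‖ ^ 2 / (2 * σ) := by
        rw [div_eq_mul_one_div R, mul_comm R]
        gcongr
        linarith

lemma mirrorDescent_regret_le_of_scale (hσ : 0 < σ) (hψ : StrongConvexOn Q σ ψ) (hN : 1 ≤ N)
    (hx1 : x 1 ∈ Q)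
    (hψ' : ∀ k, 1 ≤ k → k ≤ N + 1 → HasFDerivWithinAt ψ (ψ' (x k)) Q (x k)) (hz : z ∈ Q)
    (hRpos : 0 < R) (hR : ∀ k, 1 ≤ k → k ≤ N → bregman ψ ψ' z (x k) ≤ R)
    {D : ℕ → ℝ} {M : ℝ} (hM : ∀ k, 1 ≤ k → k ≤ N → ‖g k‖ ≤ M)
    (hD : ∀ k, 1 ≤ k → k ≤ N → 0 < D k) (hDmono : MonotoneOn D (Set.Icc 1 N))
    (hgD : ∀ k, 1 ≤ k → k ≤ N → ‖g k‖ * √k ≤ D k) (hDM : D N ≤ M * √N)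
    (hstep : ∀ k, 1 ≤ k → k ≤ N →
      IsMirrorDescentStep ψ ψ' Q (g k) (√(2 * σ * R) / D k) (x k) (x (k + 1))) :
    ∑ k ∈ Icc 1 N, g k (x k - z) ≤ 3 * √(R / (2 * σ)) * M * √N := by
  have hs : 0 < √(2 * σ * R) := by positivity
  have hM0 : 0 ≤ M := (norm_nonneg _).trans (hM 1 le_rfl hN)
  calc ∑ k ∈ Icc 1 N, g k (x k - z)
      ≤ R / (√(2 * σ * R) / D N) +
          ∑ k ∈ Icc 1 N, √(2 * σ * R) / D k * ‖g k‖ ^ 2 / (2 * σ) :=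
        mirrorDescent_regret_le hσ hψ hN hx1 hψ' hz hR
          (fun k hk1 hkN => div_pos hs (hD k hk1 hkN))
          (fun k hk l hl hkl => div_le_div_of_nonneg_left hs.le (hD k hk.1 hk.2)
            (hDmono hk hl hkl)) hstep
    _ = R / √(2 * σ * R) * D N +
          √(2 * σ * R) / (2 * σ) * ∑ k ∈ Icc 1 N, ‖g k‖ ^ 2 / D k := by
        rw [mul_sum, div_div_eq_mul_div, mul_div_right_comm]
        congr! 2
        ring
    _ = √(R / (2 * σ)) * (D N + ∑ k ∈ Icc 1 N, ‖g k‖ ^ 2 / D k) := by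
        rw [div_sqrt_two_mul_mul hσ, sqrt_two_mul_mul_div hσ, mul_add]
    _ ≤ √(R / (2 * σ)) * (M * √N + 2 * M * √N) := by
        gcongr
        exact sum_sq_div_le hM0 (fun k => norm_nonneg (g k)) hM hgD
    _ = 3 * √(R / (2 * σ)) * M * √N := by ring

lemma mirrorDescent_regret_le_of_adaptiveScale (hσ : 0 < σ) (hψ : StrongConvexOn Q σ ψ)
    (hN : 1 ≤ N) (hx1 : x 1 ∈ Q)
    (hψ' : ∀ k, 1 ≤ k → k ≤ N + 1 → HasFDerivWithinAt ψ (ψ' (x k)) Q (x k)) (hz : z ∈ Q)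
    (hRpos : 0 < R) (hR : ∀ k, 1 ≤ k → k ≤ N → bregman ψ ψ' z (x k) ≤ R) (hg : g 1 ≠ 0)
    {a : ℝ} (ha0 : 0 ≤ a) (ha1 : a ≤ 1) {D : ℕ → ℝ}
    (hD : ∀ k (hk : 1 ≤ k), k ≤ N → D k = adaptiveScale (fun j => ‖g j‖) a k hk)
    (hstep : ∀ k, 1 ≤ k → k ≤ N →
      IsMirrorDescentStep ψ ψ' Q (g k) (√(2 * σ * R) / D k) (x k) (x (k + 1))) :
    ∑ k ∈ Icc 1 N, g k (x k - z) ≤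
      3 * √(R / (2 * σ)) * (Icc 1 N).sup' (nonempty_Icc.mpr hN) (fun k => ‖g k‖) * √N := by
  have hg1 : 0 < ‖g 1‖ := norm_pos_iff.2 hg
  have hM : ∀ k, 1 ≤ k → k ≤ N → ‖g k‖ ≤
      (Icc 1 N).sup' (nonempty_Icc.mpr hN) (fun k => ‖g k‖) := fun k hk hkN =>
    le_sup' (fun k => ‖g k‖) (mem_Icc.2 ⟨hk, hkN⟩)
  have hDpos : ∀ k, 1 ≤ k → k ≤ N → 0 < D k := fun k hk hkN =>
    (adaptiveScale_pos ha0 hg1 hk).trans_eq (hD k hk hkN).symm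
  have hDmono : MonotoneOn D (Set.Icc 1 N) := fun k hk l hl hkl => by
    rw [hD k hk.1 hk.2, hD l hl.1 hl.2]
    exact adaptiveScale_mono ha0 hg1.le hk.1 hkl
  have hgD : ∀ k, 1 ≤ k → k ≤ N → ‖g k‖ * √k ≤ D k := fun k hk hkN =>
    (mul_sqrt_le_adaptiveScale (fun j => ‖g j‖) a hk).trans_eq (hD k hk hkN).symm
  have hDM : D N ≤ (Icc 1 N).sup' (nonempty_Icc.mpr hN) (fun k => ‖g k‖) * √N :=
    (hD N hN le_rfl).trans_le
      (adaptiveScale_le_mul_sqrt ha1 (hg1.le.trans (hM 1 le_rfl hN)) hN hM)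
  exact mirrorDescent_regret_le_of_scale hσ hψ hN hx1 hψ' hz hRpos hR hM hDpos hDmono hgD hDM
    hstep

end Regret

theorem lipschitz_free_mirror_descent_optimal_rate_general
    {E : Type*} [NormedAddCommGroup E] [NormedSpace ℝ E]
    (Q : Set E) (ψ : E → ℝ) (ψ' : E → E →L[ℝ] ℝ) (σ : ℝ) (hσ : 0 < σ)
    (hψstrong : StrongConvexOn Q σ ψ)
    (f : E → ℝ) (hfconv : ConvexOn ℝ Q f) (z : E) (hz : z ∈ Q) (R : ℝ) (hR : 0 < R)
    (a : ℝ) (ha0 : 0 ≤ a) (ha1 : a ≤ 1) (N : ℕ) (hN : 1 ≤ N)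
    (x : ℕ → E) (gf : ℕ → E →L[ℝ] ℝ) (G γ : ℕ → ℝ)
    (hx1 : x 1 ∈ Q)
    (hψdiff : ∀ k, 1 ≤ k → k ≤ N + 1 → HasFDerivWithinAt ψ (ψ' (x k)) Q (x k))
    (hbound : ∀ k, 1 ≤ k → k ≤ N → bregman ψ ψ' z (x k) ≤ R)
    (hsub : ∀ k, 1 ≤ k → k ≤ N → IsSubgradientAt f Q (gf k) (x k))
    (hgf : gf 1 ≠ 0)
    (hG : ∀ k (hk : 1 ≤ k), k ≤ N →
      G k = (Icc 1 k).sup' (nonempty_Icc.mpr hk) (fun j => ‖gf j‖ * (j : ℝ) ^ ((1 - a) / 2)))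
    (hγ : ∀ k, 1 ≤ k → k ≤ N → γ k = √(2 * σ * R) / (G k * (k : ℝ) ^ (a / 2)))
    (hstep : ∀ k, 1 ≤ k → k ≤ N →
      IsMirrorDescentStep ψ ψ' Q (gf k) (γ k) (x k) (x (k + 1))) :
    f ((N : ℝ)⁻¹ • ∑ k ∈ Icc 1 N, x k) - f z ≤
      3 * √(R / (2 * σ)) * (1 / √N) * (Icc 1 N).sup' (nonempty_Icc.mpr hN) (fun k => ‖gf k‖) := by
  have hx := mem_of_succ_mem hx1 fun k hk hkN => (hstep k hk hkN).1
  have hregret := mirrorDescent_regret_le_of_adaptiveScale hσ hψstrong hN hx1 hψdiff hz hR hbound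
    hgf ha0 ha1 (D := fun k => G k * (k : ℝ) ^ (a / 2))
    (fun k hk hkN => by rw [hG k hk hkN, adaptiveScale])
    (fun k hk hkN => hγ k hk hkN ▸ hstep k hk hkN)
  have hNpos : (0 : ℝ) < N := Nat.cast_pos.2 hN
  calc f ((N : ℝ)⁻¹ • ∑ k ∈ Icc 1 N, x k) - f z ≤ (N : ℝ)⁻¹ * ∑ k ∈ Icc 1 N, gf k (x k - z) := by
        rw [smul_sum, mul_sum]
        refine map_sum_smul_sub_le_of_isSubgradientAt hfconv (fun _ _ => by positivity)
          (by simp [hNpos.ne']) (fun k hk => ?_) (fun k hk => ?_) hz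
        · exact hx k (mem_Icc.1 hk).1 ((mem_Icc.1 hk).2.trans N.le_succ)
        · exact hsub k (mem_Icc.1 hk).1 (mem_Icc.1 hk).2
    _ ≤ (N : ℝ)⁻¹ * (3 * √(R / (2 * σ)) *
          (Icc 1 N).sup' (nonempty_Icc.mpr hN) (fun k => ‖gf k‖) * √N) := by gcongr
    _ = 3 * √(R / (2 * σ)) * (1 / √N) *
          (Icc 1 N).sup' (nonempty_Icc.mpr hN) (fun k => ‖gf k‖) := by
        rw [← Real.sqrt_div_self']
        ring

/-- **Corollary 1 (optimal rate of Lipschitz-free mirror descent).** Under the setting of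
Theorem 1 with `m = 0`, the uniform average satisfies
`f((1/N) ∑ x^k) − f(x*) ≤ 3 √(R/(2σ)) · (1/√N) · max_k ‖∇f(x^k)‖_*`. -/
theorem lipschitz_free_mirror_descent_optimal_rate
    {E : Type*} [NormedAddCommGroup E] [NormedSpace ℝ E] [FiniteDimensional ℝ E]
    (Q : Set E) (hQcomp : IsCompact Q) (hQconv : Convex ℝ Q)
    (ψ : E → ℝ) (ψ' : E → E →L[ℝ] ℝ) (σ : ℝ) (hσ : 0 < σ)
    (hψdiff : ∀ x ∈ Q, HasFDerivWithinAt ψ (ψ' x) Q x)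
    (hψstrong : StrongConvexOn Q σ ψ)
    (f : E → ℝ) (hfconv : ConvexOn ℝ Q f) (hfcont : ContinuousOn f Q)
    (xstar : E) (hxstarQ : xstar ∈ Q) (hxstar : IsMinOn f Q xstar)
    (R : ℝ) (hR : 0 < R) (hbound : ∀ x ∈ Q, bregman ψ ψ' xstar x ≤ R)
    (a : ℝ) (ha0 : 0 ≤ a) (ha1 : a ≤ 1)
    (N : ℕ) (hN : 1 ≤ N)
    (x : ℕ → E) (gf : ℕ → E →L[ℝ] ℝ) (G γ : ℕ → ℝ)
    (hx1 : x 1 ∈ Q)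
    (hsub : ∀ k, 1 ≤ k → k ≤ N → IsSubgradientAt f Q (gf k) (x k))
    (hgf : ∀ k, 1 ≤ k → k ≤ N → gf k ≠ 0)
    (hG : ∀ k (hk : 1 ≤ k), k ≤ N →
      G k = (Finset.Icc 1 k).sup' (Finset.nonempty_Icc.mpr hk)
        (fun j => ‖gf j‖ * (j : ℝ) ^ ((1 - a) / 2)))
    (hγ : ∀ k, 1 ≤ k → k ≤ N →
      γ k = Real.sqrt (2 * σ * R) / (G k * (k : ℝ) ^ (a / 2)))
    (hstep : ∀ k, 1 ≤ k → k ≤ N → x (k + 1) ∈ Q ∧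
      IsMinOn (fun z => gf k z + (1 / γ k) * bregman ψ ψ' z (x k)) Q (x (k + 1))) :
    f (((N : ℝ))⁻¹ • ∑ k ∈ Finset.Icc 1 N, x k) - f xstar ≤
      3 * Real.sqrt (R / (2 * σ)) * (1 / Real.sqrt N)
        * (Finset.Icc 1 N).sup' (Finset.nonempty_Icc.mpr hN) (fun k => ‖gf k‖) := by
  have hxQ := mem_of_succ_mem hx1 fun k hk hkN => (hstep k hk hkN).1
  exact lipschitz_free_mirror_descent_optimal_rate_general Q ψ ψ' σ hσ hψstrong f hfconv xstar
    hxstarQ R hR a ha0 ha1 N hN x gf G γ hx1 (fun k hk hkN => hψdiff _ (hxQ k hk hkN))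
    (fun k hk hkN => hbound _ (hxQ k hk (hkN.trans N.le_succ))) hsub (hgf 1 le_rfl hN) hG hγ hstep
end
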